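/- arXiv:1805.08346 — 2 statements merged into one kernel-verified Lean document; each statement's English description precedes it below -/
import Mathlib

section
/- Let (X,π) and (Y,σ) be semidynamical systems on metric spaces, x ∈ X and y ∈ Y with L⁺(x) ≠ ∅. If y is comparable with x with respect to the set L⁺(x), then there exists a continuous map h : L⁺(x) → L⁺(y) such that 𝓛_{x,q}^∞ ⊆ 𝓛_{y,h(q)}^∞ for every q ∈ L⁺(x), and h(π(q,t)) = σ(h(q),t) for every q ∈ L⁺(x) and every t ≥ 0. -/
/-!
The times `t → ∞` with `π(x,t) → q` form a filter, proper exactly when `q ∈ L⁺(x)`. Comparability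
makes `σ(y,·)` converge along every sequence tending to this filter; interleaving two such sequences
shows that the limit does not depend on the sequence. Since the filter is countably generated,
`σ(y,·)` converges along it, and the limit is `h q`. Continuity of `h` is extension by continuity
into a regular space, and equivariance holds because the shift of times by `s` carries the filter of
`q` to that of `π(q,s)`.
-/

open Filter Topology
open scoped NNReal

/-- `π` is a semidynamical system on the metric space `Z`. -/
def IsSDS {Z : Type*} [MetricSpace Z] (π : Z → ℝ≥0 → Z) : Prop :=
  Continuous (fun p : Z × ℝ≥0 => π p.1 p.2) ∧ (∀ z, π z 0 = z) ∧
    ∀ z t s, π (π z t) s = π z (t + s)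

/-- The positive limit set of a point `x` under `π`. -/
def limitSet {Z : Type*} [MetricSpace Z] (π : Z → ℝ≥0 → Z) (x : Z) : Set Z :=
  {p | ∃ t : ℕ → ℝ≥0, Tendsto t atTop atTop ∧
    Tendsto (fun n => π x (t n)) atTop (𝓝 p)}

open Function

section Approach

variable {A X Y : Type*} [TopologicalSpace X] [TopologicalSpace Y] {f : A → X} {g : A → Y}
  {l : Filter A} {q : X}

/-- The coarsest filter finer than `l` along which `f` tends to `q`. For `f = π x` and
`l = atTop`, the sequences tending to it are those of `𝓛_{x,q}^∞`. -/
def approach (f : A → X) (l : Filter A) (q : X) : Filter A :=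
  comap f (𝓝 q) ⊓ l

lemma tendsto_approach {B : Type*} {k : Filter B} {t : B → A} :
    Tendsto t k (approach f l q) ↔ Tendsto (fun b => f (t b)) k (𝓝 q) ∧ Tendsto t k l :=
  tendsto_inf.trans (and_congr_left' tendsto_comap_iff)

lemma approach_neBot_iff : (approach f l q).NeBot ↔ MapClusterPt q l f := by
  rw [approach, neBot_inf_comap_iff_map', MapClusterPt, ClusterPt]

instance [FirstCountableTopology X] [l.IsCountablyGenerated] :
    (approach f l q).IsCountablyGenerated := by
  unfold approach
  infer_instance

lemma mapClusterPt_iff_exists_seq [FirstCountableTopology X] [l.IsCountablyGenerated] :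
    MapClusterPt q l f ↔
      ∃ t : ℕ → A, Tendsto t atTop l ∧ Tendsto (fun n => f (t n)) atTop (𝓝 q) := by
  refine ⟨fun hq => ?_, fun ⟨t, ht, htq⟩ => ?_⟩
  · have := approach_neBot_iff.2 hq
    obtain ⟨t, ht⟩ := exists_seq_tendsto (approach f l q)
    exact ⟨t, (tendsto_approach.1 ht).symm⟩
  · exact approach_neBot_iff.1 (tendsto_approach.2 ⟨htq, ht⟩).neBot

lemma tendsto_approach_of_semiconj {τ : A → A} {P : X → X} (hτ : Tendsto τ l l)
    (hf : Semiconj f τ P) (hP : ContinuousAt P q) :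
    Tendsto τ (approach f l q) (approach f l (P q)) := by
  refine tendsto_approach.2 ⟨?_, hτ.mono_left inf_le_right⟩
  simp_rw [hf.eq]
  exact hP.tendsto.comp (tendsto_comap.mono_left inf_le_left)

lemma mapClusterPt_of_semiconj {τ : A → A} {P : X → X} (hq : MapClusterPt q l f)
    (hτ : Tendsto τ l l) (hf : Semiconj f τ P) (hP : ContinuousAt P q) :
    MapClusterPt (P q) l f := by
  have := approach_neBot_iff.2 hq
  exact approach_neBot_iff.1 (tendsto_approach_of_semiconj hτ hf hP).neBot

lemma limit_approach_of_semiconj [T2Space Y] {τ : A → A} {P : X → X} {S : Y → Y} {u v : Y}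
    (hq : MapClusterPt q l f) (hτ : Tendsto τ l l) (hf : Semiconj f τ P) (hg : Semiconj g τ S)
    (hP : ContinuousAt P q) (hS : ContinuousAt S u) (hu : Tendsto g (approach f l q) (𝓝 u))
    (hv : Tendsto g (approach f l (P q)) (𝓝 v)) : v = S u := by
  have := approach_neBot_iff.2 hq
  have hgτ : Tendsto (g ∘ τ) (approach f l q) (𝓝 v) :=
    hv.comp (tendsto_approach_of_semiconj hτ hf hP)
  rw [hg.comp_eq] at hgτ
  exact tendsto_nhds_unique hgτ (hS.tendsto.comp hu)

lemma continuousOn_of_tendsto_approach [RegularSpace Y] {h : X → Y} {s : Set X}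
    (hs : ∀ p ∈ s, MapClusterPt p l f) (hh : ∀ p ∈ s, Tendsto g (approach f l p) (𝓝 (h p))) :
    ContinuousOn h s := by
  intro p hp
  refine (closed_nhds_basis (h p)).tendsto_right_iff.2 fun V ⟨hV, hVclosed⟩ => ?_
  obtain ⟨C, hC, D, hD, hCD⟩ := mem_inf_iff_superset.1 (hh p hp hV)
  obtain ⟨U, hU, hUC⟩ := mem_comap.1 hC
  filter_upwards [mem_nhdsWithin_of_mem_nhds (eventually_mem_nhds_iff.2 hU),
    self_mem_nhdsWithin] with p' hUp' hp'
  have := approach_neBot_iff.2 (hs p' hp')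
  have hUD : f ⁻¹' U ∩ D ∈ approach f l p' := inter_mem_inf (preimage_mem_comap hUp') hD
  exact hVclosed.mem_of_tendsto (hh p' hp')
    (mem_of_superset hUD ((Set.inter_subset_inter_left D hUC).trans hCD))

end Approach

section SequentialLimits

variable {A Y : Type*} [TopologicalSpace Y] [T2Space Y] {F : Filter A} {g : A → Y}

lemma limit_eq_of_forall_seq
    (hg : ∀ t : ℕ → A, Tendsto t atTop F → ∃ r, Tendsto (fun n => g (t n)) atTop (𝓝 r))
    {t s : ℕ → A} {a b : Y} (ht : Tendsto t atTop F) (hs : Tendsto s atTop F)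
    (ha : Tendsto (fun n => g (t n)) atTop (𝓝 a)) (hb : Tendsto (fun n => g (s n)) atTop (𝓝 b)) :
    a = b := by
  let interleaved (n : ℕ) : A := if Even n then t n else s n
  have hinterleaved : Tendsto interleaved atTop F :=
    (ht.mono_left inf_le_left).if (hs.mono_left inf_le_left)
  obtain ⟨r, hr⟩ := hg interleaved hinterleaved
  have har : a = r := tendsto_nhds_unique_of_frequently_eq ha hr <|
    Nat.frequently_even.mono fun n hn => by simp only [interleaved, if_pos hn]
  have hbr : b = r := tendsto_nhds_unique_of_frequently_eq hb hr <|
    Nat.frequently_odd.mono fun n hn => by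
      simp only [interleaved, if_neg (Nat.not_even_iff_odd.2 hn)]
  exact har.trans hbr.symm

lemma exists_tendsto_of_forall_seq [F.IsCountablyGenerated] [F.NeBot]
    (hg : ∀ t : ℕ → A, Tendsto t atTop F → ∃ r, Tendsto (fun n => g (t n)) atTop (𝓝 r)) :
    ∃ r, Tendsto g F (𝓝 r) := by
  obtain ⟨t, ht⟩ := exists_seq_tendsto F
  obtain ⟨a, ha⟩ := hg t ht
  refine ⟨a, tendsto_of_seq_tendsto fun s hs => ?_⟩
  obtain ⟨b, hb⟩ := hg s hs
  rwa [limit_eq_of_forall_seq hg ht hs ha hb]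

end SequentialLimits

lemma limitSet_eq_setOf_mapClusterPt {Z : Type*} [MetricSpace Z] (π : Z → ℝ≥0 → Z) (x : Z) :
    limitSet π x = {p | MapClusterPt p atTop (π x)} :=
  Set.ext fun _ => mapClusterPt_iff_exists_seq.symm

lemma IsSDS.continuous_left {Z : Type*} [MetricSpace Z] {π : Z → ℝ≥0 → Z} (hπ : IsSDS π)
    (s : ℝ≥0) : Continuous (π · s) :=
  hπ.1.comp (Continuous.prodMk_left s)

theorem stmt_3_general {T X Y : Type*} [Add T] [Preorder T] [CanonicallyOrderedAdd T]
    [(atTop : Filter T).IsCountablyGenerated] [TopologicalSpace X] [FirstCountableTopology X]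
    [TopologicalSpace Y] [T3Space Y] (π : X → T → X) (σ : Y → T → Y)
    (hπ : ∀ s, Continuous (π · s)) (hπ_add : ∀ z t s, π (π z t) s = π z (t + s))
    (hσ : ∀ s, Continuous (σ · s)) (hσ_add : ∀ z t s, σ (σ z t) s = σ z (t + s))
    (x : X) (y : Y)
    (hcomp : ∀ t : ℕ → T, Tendsto t atTop atTop →
      (∃ p, MapClusterPt p atTop (π x) ∧ Tendsto (fun n => π x (t n)) atTop (𝓝 p)) →
      ∃ q : Y, Tendsto (fun n => σ y (t n)) atTop (𝓝 q)) :
    ∃ h : X → Y, ContinuousOn h {p | MapClusterPt p atTop (π x)} ∧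
      Set.MapsTo h {p | MapClusterPt p atTop (π x)} {r | MapClusterPt r atTop (σ y)} ∧
      (∀ q, MapClusterPt q atTop (π x) → ∀ t : ℕ → T, Tendsto t atTop atTop →
        Tendsto (fun n => π x (t n)) atTop (𝓝 q) →
        Tendsto (fun n => σ y (t n)) atTop (𝓝 (h q))) ∧
      (∀ q, MapClusterPt q atTop (π x) → ∀ s : T, h (π q s) = σ (h q) s) := by
  have : Nonempty Y := ⟨y⟩
  have hlim (q : X) (hq : MapClusterPt q atTop (π x)) :
      ∃ r, Tendsto (σ y) (approach (π x) atTop q) (𝓝 r) := by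
    have := approach_neBot_iff.2 hq
    refine exists_tendsto_of_forall_seq fun t ht => ?_
    obtain ⟨htq, ht⟩ := tendsto_approach.1 ht
    exact hcomp t ht ⟨q, hq, htq⟩
  choose! h hh using hlim
  refine ⟨h, continuousOn_of_tendsto_approach (fun _ hq => hq) hh, fun q hq => ?_,
    fun q hq t ht htq => (hh q hq).comp (tendsto_approach.2 ⟨htq, ht⟩), fun q hq s => ?_⟩
  · have := approach_neBot_iff.2 hq
    exact (hh q hq).mapClusterPt.mono inf_le_right
  · have hshift : Tendsto (· + s) (atTop : Filter T) atTop :=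
      tendsto_atTop_mono (fun _ => le_self_add) tendsto_id
    have hπ_shift : Semiconj (π x) (· + s) (π · s) := fun t => (hπ_add x t s).symm
    have hσ_shift : Semiconj (σ y) (· + s) (σ · s) := fun t => (hσ_add y t s).symm
    have hπq : MapClusterPt (π q s) atTop (π x) :=
      mapClusterPt_of_semiconj hq hshift hπ_shift (hπ s).continuousAt
    exact limit_approach_of_semiconj hq hshift hπ_shift hσ_shift (hπ s).continuousAt
      (hσ s).continuousAt (hh q hq) (hh _ hπq)

theorem stmt_3 {X Y : Type*} [MetricSpace X] [MetricSpace Y]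
    (π : X → ℝ≥0 → X) (σ : Y → ℝ≥0 → Y) (hπ : IsSDS π) (hσ : IsSDS σ)
    (x : X) (y : Y)
    (hne : (limitSet π x).Nonempty)
    (hcomp : ∀ t : ℕ → ℝ≥0, Tendsto t atTop atTop →
      (∃ p ∈ limitSet π x, Tendsto (fun n => π x (t n)) atTop (𝓝 p)) →
      ∃ q : Y, Tendsto (fun n => σ y (t n)) atTop (𝓝 q)) :
    ∃ h : X → Y, ContinuousOn h (limitSet π x) ∧
      Set.MapsTo h (limitSet π x) (limitSet σ y) ∧
      (∀ q ∈ limitSet π x, ∀ t : ℕ → ℝ≥0, Tendsto t atTop atTop →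
        Tendsto (fun n => π x (t n)) atTop (𝓝 q) →
        Tendsto (fun n => σ y (t n)) atTop (𝓝 (h q))) ∧
      (∀ q ∈ limitSet π x, ∀ s : ℝ≥0, h (π q s) = σ (h q) s) := by
  simp only [limitSet_eq_setOf_mapClusterPt, Set.mem_ofPred_eq] at hcomp ⊢
  exact stmt_3_general π σ hπ.continuous_left hπ.2.2 hσ.continuous_left hσ.2.2 x y hcomp
end

section
/- Let (X,π) and (Y,σ) be semidynamical systems on metric spaces with X a complete metric space, and let x ∈ X be asymptotically stationary, i.e. there exist a stationary point p ∈ X (meaning π(p,t) = p for all t ≥ 0) and a time reparametrization g with ρ_X(π(x,t), π(p,g(t))) → 0 as t → +∞. If y ∈ Y is comparable in limit with x, then y is asymptotically stationary with respect to σ: there exist a point q ∈ Y with σ(q,t) = q for all t ≥ 0 and a time reparametrization g' with ρ_Y(σ(y,t), σ(q,g'(t))) → 0 as t → +∞. -/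
/-!
Since `p` is stationary, `π p (g t) = p`, so asymptotic stationarity of `x` says that `π x t`
converges to `p`. By comparability `σ y` then converges along every sequence of times tending to
infinity. Interleaving two such sequences shows that their limits agree, so `σ y t` converges to
some `q`. The trajectory shifted by `t` converges both to `q` and to `σ q t`, so `q` is stationary.
-/

open Filter Topology
open scoped NNReal

section Sequences

variable {α β : Type*} {l : Filter α}

lemma exists_tendsto_interleave {u v : ℕ → α} (hu : Tendsto u atTop l) (hv : Tendsto v atTop l) :
    ∃ w : ℕ → α, Tendsto w atTop l ∧ (∀ n, w (2 * n) = u n) ∧ ∀ n, w (2 * n + 1) = v n := by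
  have half : Tendsto (fun n : ℕ ↦ n / 2) atTop atTop := Nat.tendsto_div_const_atTop two_ne_zero
  refine ⟨fun n ↦ if Even n then u (n / 2) else v (n / 2), (hu.comp half).if' (hv.comp half),
    fun n ↦ ?_, fun n ↦ ?_⟩
  · simp
  · simp [show (2 * n + 1) / 2 = n by lia]

variable [TopologicalSpace β] [T2Space β] {f : α → β}

lemma tendsto_nhds_unique_of_forall_seq
    (h : ∀ w : ℕ → α, Tendsto w atTop l → ∃ b, Tendsto (fun n ↦ f (w n)) atTop (𝓝 b))
    {u v : ℕ → α} (hu : Tendsto u atTop l) (hv : Tendsto v atTop l) {b c : β}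
    (hb : Tendsto (fun n ↦ f (u n)) atTop (𝓝 b)) (hc : Tendsto (fun n ↦ f (v n)) atTop (𝓝 c)) :
    b = c := by
  obtain ⟨w, hw, w_even, w_odd⟩ := exists_tendsto_interleave hu hv
  obtain ⟨d, hd⟩ := h w hw
  have even_atTop : Tendsto (fun n : ℕ ↦ 2 * n) atTop atTop :=
    tendsto_id.const_mul_atTop' two_pos
  have odd_atTop : Tendsto (fun n : ℕ ↦ 2 * n + 1) atTop atTop :=
    (tendsto_add_atTop_nat 1).comp even_atTop
  have hbd : b = d :=
    tendsto_nhds_unique hb <| (hd.comp even_atTop).congr fun n ↦ congrArg f (w_even n)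
  have hcd : c = d :=
    tendsto_nhds_unique hc <| (hd.comp odd_atTop).congr fun n ↦ congrArg f (w_odd n)
  exact hbd.trans hcd.symm

lemma exists_tendsto_of_forall_seq_s14 [l.IsCountablyGenerated] [l.NeBot]
    (h : ∀ u : ℕ → α, Tendsto u atTop l → ∃ b, Tendsto (fun n ↦ f (u n)) atTop (𝓝 b)) :
    ∃ b, Tendsto f l (𝓝 b) := by
  obtain ⟨u, hu⟩ := exists_seq_tendsto l
  obtain ⟨b, hb⟩ := h u hu
  refine ⟨b, tendsto_of_seq_tendsto fun v hv ↦ ?_⟩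
  obtain ⟨c, hc⟩ := h v hv
  rwa [tendsto_nhds_unique_of_forall_seq h hu hv hb hc]

end Sequences

lemma isFixedPt_of_semiconj_of_tendsto {α β : Type*} [TopologicalSpace β] [T2Space β]
    {l : Filter α} [l.NeBot] {f : α → β} {shift : α → α} {T : β → β} {b : β}
    (hf : Function.Semiconj f shift T) (hshift : Tendsto shift l l)
    (hT : ContinuousAt T b) (hb : Tendsto f l (𝓝 b)) : Function.IsFixedPt T b :=
  tendsto_nhds_unique ((hT.tendsto.comp hb).congr fun a ↦ (hf a).symm) (hb.comp hshift)

lemma IsSDS.eq_of_tendsto {Z : Type*} [MetricSpace Z] {π : Z → ℝ≥0 → Z} (hπ : IsSDS π) {z q : Z}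
    (hq : Tendsto (π z) atTop (𝓝 q)) (t : ℝ≥0) : π q t = q := by
  obtain ⟨continuous_π, -, π_add⟩ := hπ
  have semiconj : Function.Semiconj (π z) (· + t) (π · t) := fun s ↦ (π_add z s t).symm
  have shift_atTop : Tendsto (· + t) atTop atTop :=
    tendsto_atTop_mono (fun _ ↦ le_self_add) tendsto_id
  have continuous_at_time : Continuous (π · t) := continuous_π.comp (.prodMk_left t)
  exact isFixedPt_of_semiconj_of_tendsto semiconj shift_atTop continuous_at_time.continuousAt hq

lemma tendsto_dist_iff_of_forall_eq {α Z : Type*} [PseudoMetricSpace Z] {l : Filter α}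
    {f c : α → Z} {p : Z} (hc : ∀ a, c a = p) :
    Tendsto (fun a ↦ dist (f a) (c a)) l (𝓝 0) ↔ Tendsto f l (𝓝 p) := by
  simpa only [hc] using tendsto_iff_dist_tendsto_zero.symm

theorem stmt_14_general {X Y : Type*} [PseudoMetricSpace X] [MetricSpace Y]
    (π : X → ℝ≥0 → X) (σ : Y → ℝ≥0 → Y) (hσ : IsSDS σ) (x : X) (y : Y)
    (p : X) (hp : ∀ t : ℝ≥0, π p t = p) (g : ℝ≥0 → ℝ≥0)
    (hasymp : Tendsto (fun t : ℝ≥0 ↦ dist (π x t) (π p (g t))) atTop (𝓝 0))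
    (hcomp : ∀ t : ℕ → ℝ≥0, Tendsto t atTop atTop →
      (∃ p' : X, Tendsto (fun n ↦ π x (t n)) atTop (𝓝 p')) →
      ∃ q : Y, Tendsto (fun n ↦ σ y (t n)) atTop (𝓝 q)) :
    ∃ q : Y, (∀ t : ℝ≥0, σ q t = q) ∧ ∃ g' : ℝ≥0 ≃ₜ ℝ≥0, g' 0 = 0 ∧
      Tendsto (fun t : ℝ≥0 ↦ dist (σ y t) (σ q (g' t))) atTop (𝓝 0) := by
  have hx : Tendsto (π x) atTop (𝓝 p) :=
    (tendsto_dist_iff_of_forall_eq fun t ↦ hp (g t)).1 hasymp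
  obtain ⟨q, hq⟩ : ∃ q, Tendsto (σ y) atTop (𝓝 q) :=
    exists_tendsto_of_forall_seq_s14 fun t ht ↦ hcomp t ht ⟨p, hx.comp ht⟩
  have stationary : ∀ t, σ q t = q := hσ.eq_of_tendsto hq
  exact ⟨q, stationary, .refl _, rfl, (tendsto_dist_iff_of_forall_eq stationary).2 hq⟩

/-- comparability in limit transfers asymptotic stationarity. -/
theorem stmt_14 {X Y : Type*} [MetricSpace X] [MetricSpace Y] [CompleteSpace X]
    (π : X → ℝ≥0 → X) (σ : Y → ℝ≥0 → Y) (hπ : IsSDS π) (hσ : IsSDS σ)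
    (x : X) (y : Y)
    (p : X) (hp : ∀ t : ℝ≥0, π p t = p)
    (g : ℝ≥0 ≃ₜ ℝ≥0) (hg0 : g 0 = 0)
    (hasymp : Tendsto (fun t : ℝ≥0 => dist (π x t) (π p (g t))) atTop (𝓝 0))
    (hcomp : ∀ t : ℕ → ℝ≥0, Tendsto t atTop atTop →
      (∃ p' : X, Tendsto (fun n => π x (t n)) atTop (𝓝 p')) →
      ∃ q : Y, Tendsto (fun n => σ y (t n)) atTop (𝓝 q)) :
    ∃ q : Y, (∀ t : ℝ≥0, σ q t = q) ∧ ∃ g' : ℝ≥0 ≃ₜ ℝ≥0, g' 0 = 0 ∧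
      Tendsto (fun t : ℝ≥0 => dist (σ y t) (σ q (g' t))) atTop (𝓝 0) :=
  stmt_14_general π σ hσ x y p hp g hasymp hcomp
end
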